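/- Suppose r is even. Then for each sign ε ∈ {+1,−1} the following two identities hold in Cl ⊗ Cl: p_{ε,−ε}·I_r = 0, and p_{εε}·( I_{r+2} − r(r^2−1)(r+2)·I_{r−2} ) = 0. These are the characteristic identities of the split Casimir operator of so_{2r} restricted to the tensor products of spinor representations of opposite and equal chirality, respectively. -/

import Mathlib

open scoped TensorProduct

noncomputable section

/-- The quadratic form `x₁² + ⋯ + x_{2r}²` on `ℂ^{2r}`. -/
def Qf (r : ℕ) : QuadraticForm ℂ (Fin (2*r) → ℂ) :=
  QuadraticMap.weightedSumSquares ℂ (fun _ : Fin (2*r) => (1:ℂ))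

/-- The Clifford algebra of `Qf r`. -/
abbrev Cl (r : ℕ) := CliffordAlgebra (Qf r)

/-- The generators `Γ_i`. -/
def Γgen (r : ℕ) (i : Fin (2*r)) : Cl r :=
  CliffordAlgebra.ι (Qf r) (Pi.single i 1)

/-- The antisymmetrised products `Γ_{[i₁…i_k]}`. -/
def Γbr (r k : ℕ) (i : Fin k → Fin (2*r)) : Cl r :=
  ((k.factorial : ℂ))⁻¹ •
    ∑ σ : Equiv.Perm (Fin k),
      ((Equiv.Perm.sign σ : ℤ) : ℂ) • (List.ofFn fun j => Γgen r (i (σ j))).prod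

/-- The invariants `I_k ∈ Cl ⊗ Cl`. -/
def Ik (r k : ℕ) : Cl r ⊗[ℂ] Cl r :=
  ∑ i : Fin k → Fin (2*r), (Γbr r k i) ⊗ₜ[ℂ] (Γbr r k i)

/-- The split Casimir element `Ĉ = −I₂/(16(2r−2))`. -/
def sC (r : ℕ) : Cl r ⊗[ℂ] Cl r := (-(16*(2*(r:ℂ)-2))⁻¹) • Ik r 2

/-- The top element `Γ_{2r+1} = (−i)^r Γ₁⋯Γ_{2r}`. -/
def Γtop (r : ℕ) : Cl r :=
  ((-Complex.I)^r) • (List.ofFn fun i : Fin (2*r) => Γgen r i).prod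

/-- The chirality projector `p_ε = (1 + ε Γ_{2r+1})/2`. -/
def pCh (r : ℕ) (ε : ℂ) : Cl r := (2:ℂ)⁻¹ • (1 + ε • Γtop r)

/-- The chirality projectors `p_{εε'} = p_ε ⊗ p_{ε'}`. -/
def ppCh (r : ℕ) (ε ε' : ℂ) : Cl r ⊗[ℂ] Cl r := (pCh r ε) ⊗ₜ[ℂ] (pCh r ε')

/-- The eigenvalues `c_k = (2k(2r−k) − r(2r−1))/(16(r−1))`. -/
def cEv (r k : ℕ) : ℂ :=
  (2*(k:ℂ)*(2*(r:ℂ)-(k:ℂ)) - (r:ℂ)*(2*(r:ℂ)-1)) / (16*((r:ℂ)-1))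

/-- The spectral projectors `P_k = Π_{j≠k} (Ĉ − c_j)/(c_k − c_j)`. -/
def Pk (r k : ℕ) : Cl r ⊗[ℂ] Cl r :=
  (((List.range (r+1)).filter (fun j => j ≠ k)).map
    (fun j => (cEv r k - cEv r j)⁻¹ • (sC r - cEv r j • 1))).prod

/-- `P_r^S = (p_{++} + p_{−−})·P_r`. -/
def PrS (r : ℕ) : Cl r ⊗[ℂ] Cl r := (ppCh r 1 1 + ppCh r (-1) (-1)) * Pk r r

/-- The ascending factorial `a_k(u) = (u/2)(u/2+1)⋯(u/2+k−1)`. -/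
def asc (u : ℂ) (k : ℕ) : ℂ := ∏ j ∈ Finset.range k, (u/2 + (j:ℂ))

/-- Reordering a product of distinct anticommuting elements changes it at most by a sign. -/
theorem prod_map_perm_eq_or_neg {ι A : Type*} [Ring A] {g : ι → A}
    (hac : ∀ i j, i ≠ j → g i * g j = -(g j * g i)) {l l' : List ι} (h : l.Perm l')
    (hl : l.Nodup) :
    (l.map g).prod = (l'.map g).prod ∨ (l.map g).prod = -(l'.map g).prod := by
  induction h with
  | nil => simp
  | cons x _ ih =>
    rcases ih hl.of_cons with h | h <;> simp [h]
  | swap x y l =>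
    right
    have hxy : y ≠ x := by
      rintro rfl
      simp at hl
    simp [← mul_assoc, hac y x hxy]
  | trans h₁ h₂ ih₁ ih₂ =>
    rcases ih₁ hl with h | h <;> rcases ih₂ (h₁.nodup_iff.1 hl) with h' | h' <;> simp [h, h']

theorem prod_map_reverse_mul_prod_map {ι A : Type*} [Ring A] {g : ι → A}
    (hsq : ∀ i, g i * g i = 1) (l : List ι) :
    (l.reverse.map g).prod * (l.map g).prod = 1 := by
  induction l with
  | nil => simp
  | cons x l ih =>
    rw [List.reverse_cons, List.map_append, List.prod_append, List.map_cons, List.prod_cons,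
      List.map_cons, List.prod_cons, List.map_nil, List.prod_nil, mul_one, mul_assoc, ← mul_assoc (g x), hsq,
      one_mul, ih]

theorem prod_map_mul_of_anticomm {ι A : Type*} [Ring A] {g : ι → A}
    (hac : ∀ i j, i ≠ j → g i * g j = -(g j * g i)) (x : ι) (l : List ι) (hx : x ∉ l) :
    (l.map g).prod * g x = (-1) ^ l.length * (g x * (l.map g).prod) := by
  induction l with
  | nil => simp
  | cons y l ih =>
    rw [List.mem_cons, not_or] at hx
    rw [List.map_cons, List.prod_cons, mul_assoc, ih hx.2, List.length_cons,
      (((Commute.neg_one_right (g y)).pow_right l.length).left_comm _), ← mul_assoc (g y),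
      hac y x (Ne.symm hx.1), pow_succ]
    simp [mul_assoc]

theorem prod_map_reverse_of_anticomm {ι A : Type*} [Ring A] {g : ι → A}
    (hac : ∀ i j, i ≠ j → g i * g j = -(g j * g i)) (l : List ι) (hl : l.Nodup) :
    (l.reverse.map g).prod = (-1) ^ (l.length.choose 2) * (l.map g).prod := by
  induction l with
  | nil => simp
  | cons x l ih =>
    rw [List.nodup_cons] at hl
    rw [List.reverse_cons, List.map_append, List.prod_append, List.map_cons, List.prod_cons,
      List.map_cons, List.prod_cons, List.map_nil, List.prod_nil, mul_one, ih hl.2, mul_assoc,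
      prod_map_mul_of_anticomm hac x l hl.1, List.length_cons, Nat.choose_succ_succ' l.length 1,
      Nat.choose_one_right, ← mul_assoc, ← pow_add, add_comm l.length]

theorem prod_ofFn_comp_swap {A : Type*} [Ring A] {n : ℕ} (h : Fin (n + 1) → A)
    (hac : ∀ a b, a ≠ b → h a * h b = -(h b * h a)) (i : Fin n) :
    (List.ofFn fun j => h (Equiv.swap i.castSucc i.succ j)).prod = -(List.ofFn h).prod := by
  induction n with
  | zero => exact i.elim0
  | succ n ih =>
    refine Fin.cases ?_ (fun i => ?_) i
    · have key (j : Fin n) :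
          Equiv.swap (0 : Fin (n + 2)) (Fin.succ 0) j.succ.succ = j.succ.succ :=
        Equiv.swap_apply_of_ne_of_ne (Fin.succ_ne_zero _)
          (fun e => Fin.succ_ne_zero _ (Fin.succ_injective _ e))
      simp only [List.ofFn_succ, List.prod_cons, Fin.castSucc_zero, Equiv.swap_apply_left,
        Equiv.swap_apply_right, key, ← mul_assoc]
      rw [hac (Fin.succ 0) 0 (Fin.succ_ne_zero _), neg_mul]
    · have h0 : Equiv.swap i.succ.castSucc i.succ.succ 0 = 0 :=
        Equiv.swap_apply_of_ne_of_ne (by simp [Fin.ext_iff]) (Fin.succ_ne_zero _).symm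
      have hs (j : Fin (n + 1)) : Equiv.swap i.succ.castSucc i.succ.succ j.succ =
          (Equiv.swap i.castSucc i.succ j).succ := by
        rw [← Fin.succ_castSucc]
        exact ((Fin.succ_injective _).swap_apply _ _ _)
      rw [List.ofFn_succ, List.ofFn_succ (f := h), List.prod_cons, List.prod_cons, h0]
      simp only [hs]
      rw [ih (fun j => h j.succ)
        (fun a b hab => hac _ _ fun e => hab (Fin.succ_injective _ e)) i, mul_neg]

/-- Permuting the factors of a product of anticommuting elements multiplies it by the sign of the
permutation. -/
theorem prod_ofFn_comp_perm {A : Type*} [Ring A] {n : ℕ} (h : Fin n → A)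
    (hac : ∀ a b, a ≠ b → h a * h b = -(h b * h a)) (σ : Equiv.Perm (Fin n)) :
    (List.ofFn fun j => h (σ j)).prod = (Equiv.Perm.sign σ : ℤ) • (List.ofFn h).prod := by
  cases n with
  | zero => simp [Subsingleton.elim σ 1]
  | succ n =>
    have hσ : σ ∈ Submonoid.closure
        (Set.range fun i : Fin n => Equiv.swap i.castSucc i.succ) := by
      rw [Equiv.Perm.mclosure_swap_castSucc_succ]
      trivial
    induction hσ using Submonoid.closure_induction generalizing h with
    | mem τ hτ =>
      obtain ⟨i, rfl⟩ := hτ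
      rw [prod_ofFn_comp_swap h hac i, Equiv.Perm.sign_swap Fin.castSucc_lt_succ.ne,
        Units.val_neg, Units.val_one, neg_smul, one_smul]
    | one => simp
    | mul σ τ _ _ ihσ ihτ =>
      have := ihτ (fun j => h (σ j)) (fun a b hab => hac _ _ (σ.injective.ne hab))
      simp only [Equiv.Perm.mul_apply]
      rw [this, ihσ h hac, smul_smul, map_mul, mul_comm, Units.val_mul]

theorem Γgen_mul_self (r : ℕ) (i : Fin (2 * r)) : Γgen r i * Γgen r i = 1 := by
  have hQ : Qf r (Pi.single i 1) = 1 := by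
    simp [Qf, QuadraticMap.weightedSumSquares_apply, Pi.single_apply]
  rw [Γgen, CliffordAlgebra.ι_sq_scalar, hQ, map_one]

theorem Γgen_anticomm (r : ℕ) (i j : Fin (2 * r)) (h : i ≠ j) :
    Γgen r i * Γgen r j = -(Γgen r j * Γgen r i) := by
  refine CliffordAlgebra.ι_mul_ι_comm_of_isOrtho ?_
  rw [QuadraticMap.isOrtho_def]
  simp only [Qf, QuadraticMap.weightedSumSquares_apply, Pi.add_apply, Pi.single_apply, one_smul,
    ← Finset.sum_add_distrib]
  refine Finset.sum_congr rfl fun k _ => ?_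
  by_cases hi : k = i
  · subst hi
    simp [h]
  · simp [hi]

theorem Γbr_of_not_injective (r k : ℕ) (i : Fin k → Fin (2 * r)) (hi : ¬ Function.Injective i) :
    Γbr r k i = 0 := by
  obtain ⟨a, b, hab, hne⟩ := Function.not_injective_iff.1 hi
  have hswap (j : Fin k) : i (Equiv.swap a b j) = i j := by
    rw [Equiv.swap_apply_def]
    split_ifs with h h
    · rw [h, hab]
    · rw [h, hab]
    · rfl
  rw [Γbr]
  set f : Equiv.Perm (Fin k) → Cl r := fun σ =>
    ((Equiv.Perm.sign σ : ℤ) : ℂ) • (List.ofFn fun j => Γgen r (i (σ j))).prod with hf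
  have hneg : ∑ σ, f σ = -∑ σ, f σ := by
    conv_lhs => rw [← Equiv.sum_comp (Equiv.mulLeft (Equiv.swap a b)) f]
    rw [← Finset.sum_neg_distrib]
    refine Finset.sum_congr rfl fun σ _ => ?_
    simp [hf, hswap, Equiv.Perm.sign_swap hne]
  have hzero : (2 : ℂ) • ∑ σ, f σ = 0 := by
    rw [two_smul]
    nth_rewrite 1 [hneg]
    exact neg_add_cancel _
  rw [(smul_eq_zero_iff_right (two_ne_zero' ℂ)).1 hzero, smul_zero]

theorem Γbr_of_injective (r k : ℕ) (i : Fin k → Fin (2 * r)) (hi : Function.Injective i) :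
    Γbr r k i = (List.ofFn fun j => Γgen r (i j)).prod := by
  rw [Γbr]
  have hterm (σ : Equiv.Perm (Fin k)) :
      ((Equiv.Perm.sign σ : ℤ) : ℂ) • (List.ofFn fun j => Γgen r (i (σ j))).prod =
        (List.ofFn fun j => Γgen r (i j)).prod := by
    rw [prod_ofFn_comp_perm (fun j => Γgen r (i j))
      (fun a b hab => Γgen_anticomm r _ _ (hi.ne hab)) σ, Int.cast_smul_eq_zsmul, smul_smul,
      ← Units.val_mul, Int.units_mul_self, Units.val_one, one_smul]
  rw [Finset.sum_congr rfl fun σ _ => hterm σ, Finset.sum_const, Finset.card_univ,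
    Fintype.card_perm, Fintype.card_fin, ← Nat.cast_smul_eq_nsmul ℂ, smul_smul,
    inv_mul_cancel₀ (by exact_mod_cast k.factorial_ne_zero), one_smul]

/-- The tensor square of the product of the generators indexed by a list. -/
def Γsq (r : ℕ) (l : List (Fin (2 * r))) : Cl r ⊗[ℂ] Cl r :=
  (l.map (Γgen r)).prod ⊗ₜ[ℂ] (l.map (Γgen r)).prod

theorem Γsq_perm (r : ℕ) {l l' : List (Fin (2 * r))} (h : l.Perm l') (hl : l.Nodup) :
    Γsq r l = Γsq r l' := by
  rcases prod_map_perm_eq_or_neg (Γgen_anticomm r) h hl with h | h <;>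
    simp [Γsq, h, TensorProduct.neg_tmul, TensorProduct.tmul_neg]

theorem card_injective_image_eq {α : Type*} [Fintype α] [DecidableEq α] (k : ℕ) (S : Finset α)
    (hS : S.card = k) :
    (Finset.univ.filter fun i : Fin k → α =>
      Function.Injective i ∧ Finset.univ.image i = S).card = k.factorial := by
  have hcard : Fintype.card (Fin k ≃ S) = k.factorial := by
    rw [Fintype.card_equiv (S.equivFinOfCardEq hS).symm, Fintype.card_fin]
  rw [← hcard, ← Finset.card_univ, eq_comm]
  refine Finset.card_bij (fun e _ j => (e j : α)) ?_ ?_ ?_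
  · intro e _
    simp only [Finset.mem_filter_univ]
    refine ⟨Subtype.val_injective.comp e.injective, ?_⟩
    ext x
    simp only [Finset.mem_image, Finset.mem_univ, true_and]
    constructor
    · rintro ⟨j, rfl⟩
      exact (e j).2
    · intro hx
      exact ⟨e.symm ⟨x, hx⟩, by simp⟩
  · intro e _ e' _ h
    ext j
    exact congrFun h j
  · intro i hi
    simp only [Finset.mem_filter_univ] at hi
    obtain ⟨hi, rfl⟩ := hi
    refine ⟨Equiv.ofBijective
      (fun j => ⟨i j, Finset.mem_image_of_mem i (Finset.mem_univ j)⟩) ⟨?_, ?_⟩,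
      Finset.mem_univ _, rfl⟩
    · intro a b hab
      exact hi (congrArg Subtype.val hab)
    · rintro ⟨x, hx⟩
      obtain ⟨j, _, rfl⟩ := Finset.mem_image.1 hx
      exact ⟨j, rfl⟩

theorem Ik_eq_factorial_smul_sum (r k : ℕ) :
    Ik r k = (k.factorial : ℂ) •
      ∑ S ∈ Finset.powersetCard k (Finset.univ : Finset (Fin (2 * r))), Γsq r S.toList := by
  classical
  have hinj : Ik r k = ∑ i ∈ Finset.univ.filter
      (fun i : Fin k → Fin (2 * r) => Function.Injective i), Γsq r (List.ofFn i) := by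
    rw [Ik, Finset.sum_filter]
    refine Finset.sum_congr rfl fun i _ => ?_
    split_ifs with hi
    · rw [Γbr_of_injective r k i hi, Γsq, List.map_ofFn]
      rfl
    · rw [Γbr_of_not_injective r k i hi, TensorProduct.zero_tmul]
  have hmaps : ∀ i ∈ Finset.univ.filter
      (fun i : Fin k → Fin (2 * r) => Function.Injective i),
      Finset.univ.image i ∈ Finset.powersetCard k (Finset.univ : Finset (Fin (2 * r))) := by
    intro i hi
    rw [Finset.mem_filter_univ] at hi
    rw [Finset.mem_powersetCard]
    exact ⟨Finset.subset_univ _, by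
      rw [Finset.card_image_of_injective _ hi, Finset.card_univ, Fintype.card_fin]⟩
  rw [hinj, ← Finset.sum_fiberwise_of_maps_to hmaps, Finset.smul_sum]
  refine Finset.sum_congr rfl fun S hS => ?_
  rw [Finset.filter_filter, Finset.sum_congr rfl (g := fun _ => Γsq r S.toList), Finset.sum_const,
    card_injective_image_eq k S (Finset.mem_powersetCard.1 hS).2, Nat.cast_smul_eq_nsmul]
  intro i hi
  rw [Finset.mem_filter_univ] at hi
  have hnd : (List.ofFn i).Nodup := List.nodup_ofFn.2 hi.1
  refine Γsq_perm r ((List.perm_ext_iff_of_nodup hnd S.nodup_toList).2 fun x => ?_) hnd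
  simp [← hi.2, List.mem_ofFn]

theorem Γtop_eq (r : ℕ) :
    Γtop r = ((-Complex.I) ^ r) • ((List.finRange (2 * r)).map (Γgen r)).prod := by
  rw [Γtop, List.ofFn_eq_map]

theorem neg_I_pow_mul_self_of_even (r : ℕ) (hre : Even r) :
    (-Complex.I) ^ r * (-Complex.I) ^ r = 1 := by
  rw [← mul_pow, neg_mul_neg, Complex.I_mul_I, hre.neg_one_pow]

theorem Γtop_mul_self_of_even (r : ℕ) (hre : Even r) : Γtop r * Γtop r = 1 := by
  have hrev := prod_map_reverse_of_anticomm (Γgen_anticomm r) _ (List.nodup_finRange (2 * r))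
  have hchoose : Even ((2 * r).choose 2) := by
    rw [Nat.choose_two_right, mul_assoc, Nat.mul_div_cancel_left _ two_pos]
    exact hre.mul_right _
  rw [List.length_finRange, hchoose.neg_one_pow, one_mul] at hrev
  have hmul := prod_map_reverse_mul_prod_map (Γgen_mul_self r) (List.finRange (2 * r))
  rw [hrev] at hmul
  rw [Γtop_eq, smul_mul_smul_comm, hmul, neg_I_pow_mul_self_of_even r hre, one_smul]

theorem Γtop_tmul_mul_Γsq (r : ℕ) (hre : Even r) (S : Finset (Fin (2 * r))) :
    (Γtop r ⊗ₜ[ℂ] Γtop r) * Γsq r S.toList = Γsq r Sᶜ.toList := by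
  have hperm : (List.finRange (2 * r)).Perm (Sᶜ.toList ++ S.toList.reverse) := by
    refine (List.perm_ext_iff_of_nodup (List.nodup_finRange _) ?_).2 fun x => ?_
    · refine List.Nodup.append (Finset.nodup_toList _)
        (List.nodup_reverse.2 (Finset.nodup_toList _)) fun x hx hx' => ?_
      simp at hx hx'
      exact hx hx'
    · simpa using (em' (x ∈ S))
  have hmul : ((Sᶜ.toList ++ S.toList.reverse).map (Γgen r)).prod *
      (S.toList.map (Γgen r)).prod = (Sᶜ.toList.map (Γgen r)).prod := by
    rw [List.map_append, List.prod_append, mul_assoc,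
      prod_map_reverse_mul_prod_map (Γgen_mul_self r), mul_one]
  rw [Γsq, Γsq, Algebra.TensorProduct.tmul_mul_tmul, Γtop_eq, smul_mul_assoc,
    TensorProduct.smul_tmul_smul, neg_I_pow_mul_self_of_even r hre, one_smul]
  rcases prod_map_perm_eq_or_neg (Γgen_anticomm r) hperm (List.nodup_finRange _) with h | h <;>
    rw [h]
  · rw [hmul]
  · rw [neg_mul, hmul, TensorProduct.neg_tmul, TensorProduct.tmul_neg, neg_neg]

/-- Multiplication by `Γ_{2r+1} ⊗ Γ_{2r+1}` realises Hodge duality on the invariants. -/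
theorem Γtop_tmul_mul_sum (r : ℕ) (hre : Even r) {k l : ℕ} (hkl : k + l = 2 * r) :
    (Γtop r ⊗ₜ[ℂ] Γtop r) *
      ∑ S ∈ Finset.powersetCard k (Finset.univ : Finset (Fin (2 * r))), Γsq r S.toList =
      ∑ S ∈ Finset.powersetCard l (Finset.univ : Finset (Fin (2 * r))), Γsq r S.toList := by
  rw [Finset.mul_sum]
  refine Finset.sum_bij' (fun S _ => Sᶜ) (fun S _ => Sᶜ) ?_ ?_ (fun S _ => compl_compl S)
    (fun S _ => compl_compl S) (fun S _ => Γtop_tmul_mul_Γsq r hre S)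
  all_goals
    intro S hS
    rw [Finset.mem_powersetCard] at hS ⊢
    refine ⟨Finset.subset_univ _, ?_⟩
    rw [Finset.card_compl, Fintype.card_fin]
    omega

theorem pCh_mul_Γtop (r : ℕ) (hre : Even r) (ε : ℂ) (hε : ε * ε = 1) :
    pCh r ε * Γtop r = ε • pCh r ε := by
  rw [pCh, smul_mul_assoc, smul_comm ε, add_mul, one_mul, smul_mul_assoc,
    Γtop_mul_self_of_even r hre, smul_add ε, smul_smul ε ε, hε, one_smul, add_comm]

theorem ppCh_mul_Γtop_tmul (r : ℕ) (hre : Even r) (ε ε' : ℂ) (hε : ε * ε = 1)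
    (hε' : ε' * ε' = 1) :
    ppCh r ε ε' * (Γtop r ⊗ₜ[ℂ] Γtop r) = (ε * ε') • ppCh r ε ε' := by
  rw [ppCh, Algebra.TensorProduct.tmul_mul_tmul, pCh_mul_Γtop r hre ε hε,
    pCh_mul_Γtop r hre ε' hε', TensorProduct.smul_tmul_smul]

/-- for even `r`, the characteristic identities
`p_{ε,−ε}·I_r = 0` and `p_{εε}·(I_{r+2} − r(r²−1)(r+2)·I_{r−2}) = 0`. -/
theorem char_idens_even_r (r : ℕ) (hr : 2 ≤ r) (hre : Even r)
    (ε : ℂ) (hε : ε = 1 ∨ ε = -1) :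
    ppCh r ε (-ε) * Ik r r = 0 ∧
    ppCh r ε ε * (Ik r (r+2) - ((r:ℂ)*((r:ℂ)^2-1)*((r:ℂ)+2)) • Ik r (r-2)) = 0 := by
  have hε2 : ε * ε = 1 := by rcases hε with rfl | rfl <;> norm_num
  constructor
  · have hdual := Γtop_tmul_mul_sum r hre (two_mul r).symm
    rw [Ik_eq_factorial_smul_sum, mul_smul_comm]
    set E := ∑ S ∈ Finset.powersetCard r (Finset.univ : Finset (Fin (2 * r))), Γsq r S.toList
    have hneg : ppCh r ε (-ε) * E = -(ppCh r ε (-ε) * E) := by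
      conv_lhs => rw [← hdual]
      rw [← mul_assoc, ppCh_mul_Γtop_tmul r hre ε (-ε) hε2 (by rwa [neg_mul_neg]), mul_neg, hε2,
        neg_smul, one_smul, neg_mul]
    have hzero : (2 : ℂ) • (ppCh r ε (-ε) * E) = 0 := by
      rw [two_smul]
      nth_rewrite 1 [hneg]
      exact neg_add_cancel _
    rw [(smul_eq_zero_iff_right (two_ne_zero' ℂ)).1 hzero, smul_zero]
  · have hdual := Γtop_tmul_mul_sum r hre (k := r - 2) (l := r + 2) (by omega)
    have hfac : ((r + 2).factorial : ℂ) =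
        (r : ℂ) * ((r : ℂ) ^ 2 - 1) * ((r : ℂ) + 2) * ((r - 2).factorial : ℂ) := by
      obtain ⟨m, rfl⟩ := Nat.exists_eq_add_of_le' hr
      rw [Nat.add_sub_cancel]
      simp only [Nat.factorial_succ]
      push_cast
      ring
    rw [Ik_eq_factorial_smul_sum r (r + 2), Ik_eq_factorial_smul_sum r (r - 2), smul_smul, ← hfac,
      ← smul_sub, mul_smul_comm, mul_sub, ← hdual, ← mul_assoc,
      ppCh_mul_Γtop_tmul r hre ε ε hε2 hε2, hε2, one_smul, sub_self, smul_zero]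

end
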